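/- For every c < 1/4 and every ε > 0, there exist arbitrarily large n and an n-vertex graph G with at least c n^2 edges such that every edge of G lies in at least one triangle, but no edge of G lies in more than n^ε triangles. In particular, h(n,c) = n^{o(1)} for every fixed c < 1/4. -/

import Mathlib

namespace ErdosRothschild

section Blowup

variable {A Z : Type*} (E : A → A → Prop) (f : A → A → Z) (T : Type*)

/-- The oriented adjacency of `blowup`: the two parts `A × T` are joined through `E`, and `z` is
joined to the copies of `x` and of `y` whenever `E x y` and `f x y = z`. -/
def blowupRel : (A × T) ⊕ (A × T) ⊕ Z → (A × T) ⊕ (A × T) ⊕ Z → Prop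
  | .inl a, .inr (.inl b) => E a.1 b.1
  | .inl a, .inr (.inr z) => ∃ y, E a.1 y ∧ f a.1 y = z
  | .inr (.inl b), .inr (.inr z) => ∃ x, E x b.1 ∧ f x b.1 = z
  | _, _ => False

/-- The tripartite graph obtained from the triangles `x, y, f x y` with `E x y` by replacing each
vertex of the first two parts by `T` copies. -/
def blowup : SimpleGraph ((A × T) ⊕ (A × T) ⊕ Z) where
  Adj u v := blowupRel E f T u v ∨ blowupRel E f T v u
  symm := ⟨fun _ _ h => h.symm⟩
  loopless := ⟨by rintro (a | b | z) (h | h) <;> exact h⟩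

/-- The triples spanning a triangle of the tripartite graph before blowing up. -/
def IsTriangle (x y : A) (z : Z) : Prop :=
  E x y ∧ (∃ y', E x y' ∧ f x y' = z) ∧ ∃ x', E x' y ∧ f x' y = z

variable {E f T}

lemma blowup_exists_common_neighbor {u v : (A × T) ⊕ (A × T) ⊕ Z} (h : (blowup E f T).Adj u v) :
    ∃ w, (blowup E f T).Adj u w ∧ (blowup E f T).Adj v w := by
  have key : ∀ u v, blowupRel E f T u v →
      ∃ w, (blowup E f T).Adj u w ∧ (blowup E f T).Adj v w := by
    rintro (a | b | z) (a' | b' | z') h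
    · exact h.elim
    · exact ⟨.inr (.inr (f a.1 b'.1)), .inl ⟨_, h, rfl⟩, .inl ⟨_, h, rfl⟩⟩
    · obtain ⟨y, hy, hz⟩ := h
      exact ⟨.inr (.inl (y, a.2)), .inl hy, .inr ⟨_, hy, hz⟩⟩
    · exact h.elim
    · exact h.elim
    · obtain ⟨x, hx, hz⟩ := h
      exact ⟨.inl (x, b.2), .inr hx, .inr ⟨_, hx, hz⟩⟩
    all_goals exact h.elim
  rcases h with h | h
  · exact key u v h
  · obtain ⟨w, h1, h2⟩ := key v u h
    exact ⟨w, h2, h1⟩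

lemma blowup_ncard_common_neighbors_le [Finite A] [Finite Z] [Finite T] [Nonempty T] {M : ℕ}
    (hz : ∀ x y, {z | IsTriangle E f x y z}.ncard ≤ M)
    (hy : ∀ x z, {y | IsTriangle E f x y z}.ncard ≤ M)
    (hx : ∀ y z, {x | IsTriangle E f x y z}.ncard ≤ M)
    {u v : (A × T) ⊕ (A × T) ⊕ Z} (h : (blowup E f T).Adj u v) :
    {w | (blowup E f T).Adj u w ∧ (blowup E f T).Adj v w}.ncard ≤ M * Nat.card T := by
  have hT : 1 ≤ Nat.card T := Nat.card_pos
  have copies : ∀ (s : Set A) (g : A × T → (A × T) ⊕ (A × T) ⊕ Z), s.ncard ≤ M →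
      (g '' (s ×ˢ Set.univ)).ncard ≤ M * Nat.card T := fun s g hs =>
    (Set.ncard_image_le (Set.toFinite _)).trans <| by
      rw [Set.ncard_prod, Set.ncard_univ]
      exact Nat.mul_le_mul_right _ hs
  have key : ∀ u v, blowupRel E f T u v →
      {w | (blowup E f T).Adj u w ∧ (blowup E f T).Adj v w}.ncard ≤ M * Nat.card T := by
    rintro (a | b | z) (a' | b' | z') h
    · exact h.elim
    · refine (Set.ncard_le_ncard (t := (fun z => .inr (.inr z)) ''
        {z | IsTriangle E f a.1 b'.1 z}) ?_ (Set.toFinite _)).trans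
        ((Set.ncard_image_le (Set.toFinite _)).trans ((hz _ _).trans (Nat.le_mul_of_pos_right _ hT)))
      rintro (a'' | b'' | z'') ⟨h1 | h1, h2 | h2⟩ <;> try first | exact h1.elim | exact h2.elim
      exact ⟨z'', ⟨h, h1, h2⟩, rfl⟩
    · refine (Set.ncard_le_ncard (t := (fun y => .inr (.inl y)) ''
        ({y | IsTriangle E f a.1 y z'} ×ˢ Set.univ)) ?_ (Set.toFinite _)).trans
        (copies _ _ (hy _ _))
      rintro (a'' | b'' | z'') ⟨h1 | h1, h2 | h2⟩ <;> try first | exact h1.elim | exact h2.elim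
      exact ⟨b'', ⟨⟨h1, h, h2⟩, trivial⟩, rfl⟩
    · exact h.elim
    · exact h.elim
    · refine (Set.ncard_le_ncard (t := (fun x => .inl x) ''
        ({x | IsTriangle E f x b.1 z'} ×ˢ Set.univ)) ?_ (Set.toFinite _)).trans
        (copies _ _ (hx _ _))
      rintro (a'' | b'' | z'') ⟨h1 | h1, h2 | h2⟩ <;> try first | exact h1.elim | exact h2.elim
      exact ⟨a'', ⟨⟨h1, h2, h⟩, trivial⟩, rfl⟩
    all_goals exact h.elim
  rcases h with h | h
  · exact key u v h
  · simpa only [and_comm] using key v u h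

lemma le_blowup_ncard_edgeSet [Finite A] [Finite Z] [Finite T] :
    {p : A × A | E p.1 p.2}.ncard * Nat.card T ^ 2 ≤ (blowup E f T).edgeSet.ncard := by
  have hT : Nat.card T ^ 2 = (Set.univ : Set (T × T)).ncard := by
    rw [Set.ncard_univ, Nat.card_prod, sq]
  rw [hT, ← Set.ncard_prod]
  refine Set.ncard_le_ncard_of_injOn
    (fun q => s(.inl (q.1.1, q.2.1), .inr (.inl (q.1.2, q.2.2)))) ?_ ?_ (Set.toFinite _)
  · rintro ⟨⟨x, y⟩, s, t⟩ ⟨h, -⟩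
    exact Or.inl h
  · rintro ⟨⟨x, y⟩, s, t⟩ - ⟨⟨x', y'⟩, s', t'⟩ - h
    simp_all

lemma exists_fin_graph_of_blowup [Finite A] [Finite Z] [Finite T] [Nonempty T] {M : ℕ}
    (hz : ∀ x y, {z | IsTriangle E f x y z}.ncard ≤ M)
    (hy : ∀ x z, {y | IsTriangle E f x y z}.ncard ≤ M)
    (hx : ∀ y z, {x | IsTriangle E f x y z}.ncard ≤ M) {n : ℕ}
    (hn : Nat.card ((A × T) ⊕ (A × T) ⊕ Z) = n) :
    ∃ G : SimpleGraph (Fin n),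
      {p : A × A | E p.1 p.2}.ncard * Nat.card T ^ 2 ≤ G.edgeSet.ncard ∧
      ∀ u v, G.Adj u v → 1 ≤ {w | G.Adj u w ∧ G.Adj v w}.ncard ∧
        {w | G.Adj u w ∧ G.Adj v w}.ncard ≤ M * Nat.card T := by
  let e := Finite.equivFinOfCardEq hn
  let φ : (blowup E f T).comap e.symm ≃g blowup E f T := SimpleGraph.Iso.comap e.symm _
  refine ⟨(blowup E f T).comap e.symm, ?_, fun u v h => ⟨?_, ?_⟩⟩
  · rw [Set.ncard_congr' φ.mapEdgeSet]
    exact le_blowup_ncard_edgeSet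
  · obtain ⟨w, h1, h2⟩ := blowup_exists_common_neighbor h
    refine (Set.ncard_pos (Set.toFinite _)).2 ⟨e w, by simpa using h1, by simpa using h2⟩
  · refine le_trans ?_ (blowup_ncard_common_neighbors_le hz hy hx h)
    exact Set.ncard_le_ncard_of_injOn e.symm (fun w hw => hw) e.symm.injective.injOn
      (Set.toFinite _)

end Blowup

section Counting

/-- Sum of squares of sums of a mean-zero function over independent coordinates. -/
lemma sum_sq_sum_le {B : Type*} [Fintype B] [DecidableEq B] (g : B → ℝ) (hg : ∑ b, g b = 0) {R : ℝ}
    (hR : ∀ b, g b ^ 2 ≤ R) (d : ℕ) :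
    ∑ p : Fin d → B, (∑ i, g (p i)) ^ 2 ≤ d * Fintype.card B ^ d * R := by
  induction d with
  | zero => simp
  | succ d ih =>
    have hsq : ∑ b, g b ^ 2 ≤ Fintype.card B * R := by
      simpa using Finset.sum_le_sum fun b (_ : b ∈ Finset.univ) => hR b
    have hsplit : ∑ p : Fin (d + 1) → B, (∑ i, g (p i)) ^ 2 =
        Fintype.card B ^ d * ∑ b, g b ^ 2 +
          Fintype.card B * ∑ p : Fin d → B, (∑ i, g (p i)) ^ 2 := by
      rw [← (Fin.consEquiv fun _ : Fin (d + 1) => B).sum_comp, Fintype.sum_prod_type]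
      have h : ∀ (b : B) (p : Fin d → B),
          (∑ i, g (Fin.consEquiv (fun _ : Fin (d + 1) => B) (b, p) i)) ^ 2 =
            g b ^ 2 + g b * (2 * ∑ i, g (p i)) + (∑ i, g (p i)) ^ 2 := fun b p => by
        simp only [Fin.sum_univ_succ, Fin.consEquiv_apply, Fin.cons_zero, Fin.cons_succ]
        ring
      simp_rw [h, Finset.sum_add_distrib, ← Finset.mul_sum, ← Finset.sum_mul, hg]
      simp [Finset.mul_sum]
    rw [hsplit]
    calc _ ≤ (Fintype.card B : ℝ) ^ d * (Fintype.card B * R) +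
          Fintype.card B * (d * Fintype.card B ^ d * R) := by gcongr
      _ = _ := by push_cast; ring

lemma card_nat_sum_le (d m R : ℕ) :
    {w : Fin d → Fin R | ∑ i, (w i : ℕ) ≤ m}.ncard ≤ 2 ^ (m + d) := by
  classical
  have hgeom : ∑ k : Fin R, (1 / 2 : ℝ) ^ (k : ℕ) ≤ 2 := by
    rw [Fin.sum_univ_eq_sum_range fun k => (1 / 2 : ℝ) ^ k]
    exact sum_geometric_two_le R
  have htotal : ∑ w : Fin d → Fin R, (1 / 2 : ℝ) ^ ∑ i, (w i : ℕ) ≤ 2 ^ d := by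
    simp_rw [← Finset.prod_pow_eq_pow_sum]
    rw [← Fintype.prod_sum fun (_ : Fin d) (k : Fin R) => (1 / 2 : ℝ) ^ (k : ℕ)]
    simpa using pow_le_pow_left₀ (by positivity) hgeom d
  rw [Set.ncard_eq_toFinset_card', ← @Nat.cast_le ℝ]
  set s := {w : Fin d → Fin R | ∑ i, (w i : ℕ) ≤ m}.toFinset with hs
  have h : s.card • (1 / 2 : ℝ) ^ m ≤ 2 ^ d :=
    (Finset.card_nsmul_le_sum s (fun w => (1 / 2 : ℝ) ^ ∑ i, (w i : ℕ)) _ fun w hw =>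
      pow_le_pow_of_le_one (by norm_num) (by norm_num) (by simpa [hs] using hw)).trans
    ((Finset.sum_le_sum_of_subset_of_nonneg (Finset.subset_univ s)
      fun _ _ _ => by positivity).trans htotal)
  rw [nsmul_eq_mul, one_div, inv_pow, ← div_eq_mul_inv, div_le_iff₀ (by positivity)] at h
  push_cast
  rw [pow_add]
  linarith

/-- Few integer vectors of dimension `d` have squared length at most `2 * d`. -/
lemma ncard_le_of_sum_sq_le {β : Type*} [Finite β] {d : ℕ} (s : Set β) (φ : β → Fin d → ℤ)
    (hφ : Function.Injective φ) (hs : ∀ b ∈ s, ∑ i, φ b i ^ 2 ≤ 2 * d) :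
    s.ncard ≤ 16 ^ d := by
  have hsum : ∀ b ∈ s, ∑ i, (φ b i).natAbs ≤ 2 * d := fun b hb => by
    zify
    refine (Finset.sum_le_sum fun i _ => ?_).trans (hs b hb)
    rw [← sq_abs]
    exact Int.le_self_sq _
  let t : Set (Fin d → Fin (2 * d + 1)) := {w | ∑ i, (w i : ℕ) ≤ 2 * d}
  have hval : ∀ b ∈ s, ∀ i, (φ b i).natAbs < 2 * d + 1 := fun b hb i =>
    Nat.lt_succ_of_le ((Finset.single_le_sum (f := fun i => (φ b i).natAbs)
      (fun _ _ => Nat.zero_le _) (Finset.mem_univ i)).trans (hsum b hb))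
  have hle : s.ncard ≤ ((Set.univ : Set (Fin d → Bool)) ×ˢ t).ncard := by
    refine Set.ncard_le_ncard_of_injOn
      (fun b => (fun i => decide (0 ≤ φ b i), fun i => Fin.ofNat (2 * d + 1) (φ b i).natAbs))
      ?_ ?_ (Set.toFinite _)
    · intro b hb
      refine ⟨trivial, ?_⟩
      simp only [t, Set.mem_ofPred_eq, Fin.ofNat, Nat.mod_eq_of_lt (hval b hb _)]
      exact hsum b hb
    · intro b hb b' hb' h
      refine hφ (funext fun i => ?_)
      have h1 := congrFun (congrArg Prod.fst h) i
      have h2 := congrArg Fin.val (congrFun (congrArg Prod.snd h) i)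
      simp only [Fin.ofNat, Nat.mod_eq_of_lt (hval b hb _), Nat.mod_eq_of_lt (hval b' hb' _)] at h2
      have h3 := decide_eq_decide.1 h1
      omega
  refine hle.trans ?_
  rw [Set.ncard_prod, Set.ncard_univ]
  calc _ ≤ 2 ^ d * 2 ^ (2 * d + d) := by
        gcongr
        · simp
        · exact card_nat_sum_le _ _ _
    _ = 16 ^ d := by
        rw [← pow_add, show (16 : ℕ) = 2 ^ 4 by norm_num, ← pow_mul]
        congr 1
        ring

end Counting

section Lattice

variable {d r : ℕ}

/-- The squared Euclidean distance between points of the integer box. -/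
def sqDist (x y : Fin d → Fin r) : ℤ := ∑ i, ((x i : ℤ) - y i) ^ 2

/-- `r ^ 2` times the mean squared difference of two elements of `Fin r`. -/
def sqDiffSum (r : ℕ) : ℤ := ∑ p : Fin r × Fin r, ((p.1 : ℤ) - p.2) ^ 2

/-- The squared distance of `x` and `y` differs by at most `d` from its mean. -/
def NearMean (x y : Fin d → Fin r) : Prop :=
  |(r : ℤ) ^ 2 * sqDist x y - d * sqDiffSum r| ≤ r ^ 2 * d

/-- Coordinatewise addition from the box `[0, r)` to the box `[0, 2 * r)`. -/
def boxAdd (x y : Fin d → Fin r) : Fin d → Fin (2 * r) := fun i => ⟨x i + y i, by omega⟩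

lemma IsTriangle.sum_sq_le (hr : 0 < r) {x y : Fin d → Fin r} {z : Fin d → Fin (2 * r)}
    (h : IsTriangle NearMean boxAdd x y z) :
    ∑ i, ((x i : ℤ) + y i - z i) ^ 2 ≤ 2 * d := by
  obtain ⟨h, ⟨y', hy', hz⟩, x', hx', hz'⟩ := h
  have hy'z : ∀ i, (x i : ℤ) + y' i = z i := fun i => by
    simpa [boxAdd] using congrArg (fun w => ((w i : ℕ) : ℤ)) hz
  have hx'z : ∀ i, (x' i : ℤ) + y i = z i := fun i => by
    simpa [boxAdd] using congrArg (fun w => ((w i : ℕ) : ℤ)) hz'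
  have hpar : 2 * ∑ i, ((x i : ℤ) + y i - z i) ^ 2 =
      sqDist x y' + sqDist x' y - 2 * sqDist x y := by
    simp only [sqDist, Finset.mul_sum, ← Finset.sum_add_distrib, ← Finset.sum_sub_distrib]
    refine Finset.sum_congr rfl fun i _ => ?_
    rw [eq_sub_of_add_eq' (hy'z i), eq_sub_of_add_eq (hx'z i)]
    ring
  have h1 := (abs_le.1 h).1
  have h2 := (abs_le.1 hy').2
  have h3 := (abs_le.1 hx').2
  have hr' : (0 : ℤ) < (r : ℤ) ^ 2 := by positivity
  refine le_of_mul_le_mul_left ?_ hr'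
  have hpar' := congrArg (fun t => (r : ℤ) ^ 2 * t) hpar
  simp only [mul_add, mul_sub] at hpar'
  linarith

lemma ncard_isTriangle_le (hr : 0 < r) :
    (∀ x y : Fin d → Fin r, {z | IsTriangle NearMean boxAdd x y z}.ncard ≤ 16 ^ d) ∧
    (∀ (x : Fin d → Fin r) z, {y | IsTriangle NearMean boxAdd x y z}.ncard ≤ 16 ^ d) ∧
    (∀ (y : Fin d → Fin r) z, {x | IsTriangle NearMean boxAdd x y z}.ncard ≤ 16 ^ d) := by
  refine ⟨fun x y => ?_, fun x z => ?_, fun y z => ?_⟩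
  · refine ncard_le_of_sum_sq_le _ (fun z i => (x i : ℤ) + y i - z i) (fun z z' h => ?_)
      fun z h => h.sum_sq_le hr
    funext i
    have := congrFun h i
    simp only at this
    omega
  · refine ncard_le_of_sum_sq_le _ (fun y i => (x i : ℤ) + y i - z i) (fun y y' h => ?_)
      fun y h => h.sum_sq_le hr
    funext i
    have := congrFun h i
    simp only at this
    omega
  · refine ncard_le_of_sum_sq_le _ (fun x i => (x i : ℤ) + y i - z i) (fun x x' h => ?_)
      fun x h => h.sum_sq_le hr
    funext i
    have := congrFun h i
    simp only at this
    omega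

lemma sq_sub_val_le (p : Fin r × Fin r) : ((p.1 : ℤ) - p.2) ^ 2 ≤ (r : ℤ) ^ 2 := by
  apply sq_le_sq'
  all_goals omega

lemma sqDiffSum_nonneg (r : ℕ) : 0 ≤ sqDiffSum r :=
  Finset.sum_nonneg fun _ _ => sq_nonneg _

lemma sqDiffSum_le (r : ℕ) : sqDiffSum r ≤ (r : ℤ) ^ 4 := by
  calc sqDiffSum r ≤ ∑ _p : Fin r × Fin r, (r : ℤ) ^ 2 :=
        Finset.sum_le_sum fun p _ => sq_sub_val_le p
    _ = (r : ℤ) ^ 4 := by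
        simp
        ring

lemma ncard_not_nearMean_mul_le (hr : 0 < r) (d : ℕ) :
    {p : (Fin d → Fin r) × (Fin d → Fin r) | ¬ NearMean p.1 p.2}.ncard * d ≤
      r ^ 4 * (r ^ d) ^ 2 := by
  classical
  rcases Nat.eq_zero_or_pos d with rfl | hd
  · simp
  let g : Fin r × Fin r → ℝ := fun p => ((r ^ 2 * ((p.1 : ℤ) - p.2) ^ 2 - sqDiffSum r : ℤ) : ℝ)
  have hg : ∑ p, g p = 0 := by
    simp only [g]
    rw [← Int.cast_sum, Finset.sum_sub_distrib, ← Finset.mul_sum]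
    simp only [sqDiffSum, Finset.sum_const, Finset.card_univ, Fintype.card_prod, Fintype.card_fin]
    simp
    ring
  have hR : ∀ p, g p ^ 2 ≤ (r : ℝ) ^ 8 := fun p => by
    suffices h : (r ^ 2 * ((p.1 : ℤ) - p.2) ^ 2 - sqDiffSum r) ^ 2 ≤ ((r : ℤ) ^ 4) ^ 2 by
      rw [← pow_mul] at h
      have h' := (Int.cast_le (R := ℝ)).2 h
      rw [Int.cast_pow] at h'
      simpa only [g, Int.cast_pow, Int.cast_natCast] using h'
    have h1 := sq_sub_val_le p
    have h2 := sqDiffSum_nonneg r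
    have h3 := sqDiffSum_le r
    have h4 : (r : ℤ) ^ 2 * ((p.1 : ℤ) - p.2) ^ 2 ≤ r ^ 2 * r ^ 2 := by gcongr
    have h5 : (0 : ℤ) ≤ (r : ℤ) ^ 2 * ((p.1 : ℤ) - p.2) ^ 2 := by positivity
    apply sq_le_sq'
    · linarith
    · linarith
  have hvar := sum_sq_sum_le g hg hR d
  set s := {p : (Fin d → Fin r) × (Fin d → Fin r) | ¬ NearMean p.1 p.2}.toFinset with hs
  rw [Set.ncard_eq_toFinset_card']
  rw [← (Equiv.arrowProdEquivProdArrow (Fin d) (fun _ => Fin r) (fun _ => Fin r)).symm.sum_comp]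
    at hvar
  have hdev : ∀ p ∈ s, ((r : ℝ) ^ 2 * d) ^ 2 ≤ (∑ i, g (p.1 i, p.2 i)) ^ 2 := fun p hp => by
    have hp' : ¬ NearMean p.1 p.2 := by simpa [hs] using hp
    have hsum : ∑ i, g (p.1 i, p.2 i) = ((r ^ 2 * sqDist p.1 p.2 - d * sqDiffSum r : ℤ) : ℝ) := by
      simp only [g]
      rw [← Int.cast_sum, Finset.sum_sub_distrib, ← Finset.mul_sum]
      simp [sqDist]
    rw [hsum, ← sq_abs (((_ : ℤ) : ℝ)), ← Int.cast_abs]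
    have := (not_le.1 hp').le
    gcongr
    exact_mod_cast this
  have hmarkov := (Finset.card_nsmul_le_sum s _ _ hdev).trans
    ((Finset.sum_le_sum_of_subset_of_nonneg (Finset.subset_univ s)
      fun _ _ _ => sq_nonneg _).trans hvar)
  have hpos : (0 : ℝ) < r ^ 4 * d := by positivity
  rw [← @Nat.cast_le ℝ]
  refine le_of_mul_le_mul_left ?_ hpos
  rw [nsmul_eq_mul, Fintype.card_prod, Fintype.card_fin] at hmarkov
  push_cast at hmarkov ⊢
  have hpow : ((r : ℝ) * r) ^ d = (r ^ d) ^ 2 := by ring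
  rw [hpow] at hmarkov
  linarith

lemma le_ncard_nearMean (hr : 0 < r) {K : ℕ} (hd : K * r ^ 4 ≤ d) :
    (K - 1 : ℝ) * (r ^ d) ^ 2 ≤
      K * {p : (Fin d → Fin r) × (Fin d → Fin r) | NearMean p.1 p.2}.ncard := by
  have hcompl := Set.ncard_add_ncard_compl
    {p : (Fin d → Fin r) × (Fin d → Fin r) | NearMean p.1 p.2}
  rw [Set.compl_ofPred, Nat.card_prod, Nat.card_fun, Nat.card_fin, Nat.card_fin] at hcompl
  set B := {p : (Fin d → Fin r) × (Fin d → Fin r) | ¬ NearMean p.1 p.2}.ncard with hB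
  have h : r ^ 4 * (B * K) ≤ r ^ 4 * (r ^ d) ^ 2 :=
    calc r ^ 4 * (B * K) = B * (K * r ^ 4) := by ring
      _ ≤ B * d := by gcongr
      _ ≤ _ := ncard_not_nearMean_mul_le hr d
  have h' : ((B * K : ℕ) : ℝ) ≤ ((r ^ d) ^ 2 : ℕ) :=
    Nat.cast_le.2 (le_of_mul_le_mul_left h (by positivity))
  rw [← @Nat.cast_inj ℝ] at hcompl
  push_cast at h' hcompl
  linear_combination h' - K * hcompl

end Lattice

/-- The construction with parameters `d`, `r` and `K`, on `(2 * K + 1) * (2 * r) ^ d` vertices. -/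
lemma exists_graph {d r K : ℕ} (hr : 0 < r) (hK : 0 < K) (hd : K * r ^ 4 ≤ d) :
    ∃ G : SimpleGraph (Fin ((2 * K + 1) * (2 * r) ^ d)),
      (K - 1 : ℝ) * K * ((2 * r) ^ d) ^ 2 ≤ G.edgeSet.ncard ∧
      ∀ u v, G.Adj u v → 1 ≤ {w | G.Adj u w ∧ G.Adj v w}.ncard ∧
        {w | G.Adj u w ∧ G.Adj v w}.ncard ≤ 16 ^ d * (K * 2 ^ d) := by
  have : Nonempty (Fin (K * 2 ^ d)) := Fin.pos_iff_nonempty.1 (by positivity)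
  obtain ⟨hz, hy, hx⟩ := ncard_isTriangle_le (d := d) hr
  obtain ⟨G, hG, hG'⟩ := exists_fin_graph_of_blowup (T := Fin (K * 2 ^ d))
    (n := (2 * K + 1) * (2 * r) ^ d) hz hy hx (by
      simp only [Nat.card_sum, Nat.card_prod, Nat.card_fun, Nat.card_fin]
      rw [mul_pow]
      ring)
  rw [Nat.card_fin] at hG hG'
  refine ⟨G, ?_, hG'⟩
  have h := le_ncard_nearMean hr hd
  rw [← @Nat.cast_le ℝ] at hG
  push_cast at hG
  refine le_trans ?_ hG
  calc (K - 1 : ℝ) * K * ((2 * r) ^ d) ^ 2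
      = ((K - 1) * (r ^ d) ^ 2) * (K * (2 ^ d) ^ 2) := by rw [mul_pow]; ring
    _ ≤ _ := mul_le_mul_of_nonneg_right h (by positivity)
    _ = _ := by ring

end ErdosRothschild

/-- For every `c < 1/4` and `ε > 0` there are arbitrarily large `n` and `n`-vertex
graphs `G` with at least `c n²` edges in which every edge lies in at least one
triangle, but no edge lies in more than `n^ε` triangles. (Hence `h(n,c) = n^{o(1)}`
for every fixed `c < 1/4`.) -/
theorem erdos_rothschild_booksize (c : ℝ) (hc : c < 1 / 4) (ε : ℝ) (hε : 0 < ε)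
    (n₀ : ℕ) :
    ∃ n : ℕ, n₀ ≤ n ∧ ∃ G : SimpleGraph (Fin n),
      c * n ^ 2 ≤ (G.edgeSet.ncard : ℝ) ∧
      (∀ u v : Fin n, G.Adj u v →
        1 ≤ {w : Fin n | G.Adj u w ∧ G.Adj v w}.ncard ∧
        ({w : Fin n | G.Adj u w ∧ G.Adj v w}.ncard : ℝ) ≤ (n : ℝ) ^ ε) := by
  obtain ⟨K, hK⟩ := exists_nat_ge (max 1 (1 / (1 / 4 - c)))
  have hK1 : (1 : ℝ) ≤ K := (le_max_left _ _).trans hK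
  have hKc : 1 ≤ K * (1 / 4 - c) :=
    (div_le_iff₀ (by linarith)).1 ((le_max_right _ _).trans hK)
  obtain ⟨r, hr⟩ := exists_nat_ge (max 1 ((64 : ℝ) ^ ε⁻¹))
  have hr0 : 0 < r := by exact_mod_cast (le_max_left _ _).trans hr
  have hr64 : (64 : ℝ) ≤ (r : ℝ) ^ ε :=
    (Real.rpow_inv_le_iff_of_pos (by norm_num) (by positivity) hε).1 ((le_max_right _ _).trans hr)
  have hK0 : 0 < K := by exact_mod_cast hK1
  set d := K * r ^ 4 + n₀ with hd
  have hKd : K ≤ d := (Nat.le_mul_of_pos_right K (by positivity)).trans (Nat.le_add_right _ _)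
  obtain ⟨G, hG, hG'⟩ := ErdosRothschild.exists_graph (d := d) hr0 hK0 (Nat.le_add_right _ _)
  have hn : r ^ d ≤ (2 * K + 1) * (2 * r) ^ d := by
    calc r ^ d ≤ (2 * r) ^ d := by gcongr; omega
      _ ≤ _ := Nat.le_mul_of_pos_left _ (by omega)
  refine ⟨_, ?_, G, ?_, fun u v h => ⟨(hG' u v h).1, ?_⟩⟩
  · calc n₀ ≤ d := Nat.le_add_left _ _
      _ ≤ 2 ^ d := Nat.lt_two_pow_self.le
      _ ≤ (2 * r) ^ d := by gcongr; omega
      _ ≤ _ := Nat.le_mul_of_pos_left _ (by omega)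
  · refine le_trans ?_ hG
    push_cast
    rw [mul_pow, ← mul_assoc]
    refine mul_le_mul_of_nonneg_right ?_ (by positivity)
    nlinarith
  · have hcount : {w | G.Adj u w ∧ G.Adj v w}.ncard ≤ 64 ^ d := by
      refine (hG' u v h).2.trans ?_
      calc 16 ^ d * (K * 2 ^ d) ≤ 16 ^ d * (2 ^ d * 2 ^ d) := by
            gcongr
            exact hKd.trans Nat.lt_two_pow_self.le
        _ = 64 ^ d := by
            rw [← mul_pow, ← mul_pow]
            norm_num
    calc _ ≤ (64 : ℝ) ^ d := by exact_mod_cast hcount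
      _ ≤ ((r : ℝ) ^ ε) ^ d := by gcongr
      _ = ((r : ℝ) ^ d) ^ ε := by
          rw [← Real.rpow_mul_natCast (by positivity), mul_comm ε,
            Real.rpow_natCast_mul (by positivity)]
      _ ≤ _ := by
          gcongr
          exact_mod_cast hn
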